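/- For Lebesgue-almost every v ∈ ℝ⁴, the following both hold for the standard linear action of SL₄(ℤ) on ℝ⁴: the supremum of all ω such that |γv| ≤ |γ|^{−ω} holds for infinitely many γ ∈ SL₄(ℤ) is ≥ 1, and the supremum of all ω such that for every sufficiently large T > 0 there exists γ ∈ SL₄(ℤ) with |γv| ≤ T^{−ω} and |γ| ≤ T is ≥ 1. -/

import Mathlib

/-!
If `|α - p / q| ≤ q⁻²` with `gcd (p, q) = 1`, then `(q, -p)` is the first row of a matrix in
`SL₂(ℤ)` with entries `O(q)` that maps `(α, 1)` to a vector of size at most `2 / q`. For almost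
every `α`, Dirichlet's theorem supplies such fractions with `q` between `X ^ (1 - ε)` and `X`, for
every large `X`: a smaller `q` would make `α` well approximable beyond the exponent `2`. Hence
almost every vector of the plane is contracted, at every scale, with any exponent below `1`.
Block-diagonal matrices carry this over to every even dimension.
-/

noncomputable section

/-- Sup norm of a 4×4 integer matrix (maximum of absolute values of entries), as a real. -/
def mnorm4 (γ : Matrix (Fin 4) (Fin 4) ℤ) : ℝ :=
  ((Finset.univ.sup fun ij : Fin 4 × Fin 4 => (γ ij.1 ij.2).natAbs : ℕ) : ℝ)

/-- Sup norm of a vector in `ℝ⁴`. -/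
def vnorm4 (w : Fin 4 → ℝ) : ℝ :=
  max (max |w 0| |w 1|) (max |w 2| |w 3|)

/-- The standard linear action of `SL₄(ℤ)` on `ℝ⁴`. -/
def sl4Act (γ : Matrix.SpecialLinearGroup (Fin 4) ℤ) (v : Fin 4 → ℝ) : Fin 4 → ℝ :=
  ((γ : Matrix (Fin 4) (Fin 4) ℤ).map (Int.cast : ℤ → ℝ)).mulVec v

open Filter MeasureTheory Topology
open Matrix (SpecialLinearGroup)
open scoped MatrixGroups Matrix.Norms.Elementwise

section Diophantine

/-- The real number `x` has irrationality exponent `2`: it is irrational, and no exponent larger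
than the one in Dirichlet's theorem is attained by its rational approximations. -/
def HasIrrationalityExponentTwo (x : ℝ) : Prop :=
  Irrational x ∧ ∀ p > (2 : ℝ), ¬LiouvilleWith p x

theorem ae_irrational : ∀ᵐ x : ℝ, Irrational x :=
  (Set.countable_range ((↑) : ℚ → ℝ)).ae_notMem _

theorem ae_hasIrrationalityExponentTwo : ∀ᵐ x : ℝ, HasIrrationalityExponentTwo x :=
  ae_irrational.and ae_not_liouvilleWith

theorem exists_div_rpow_den_le_abs_sub {x p : ℝ} (hx : Irrational x) (hL : ¬LiouvilleWith p x) :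
    ∃ c > 0, ∀ r : ℚ, c / (r.den : ℝ) ^ p ≤ |x - r| := by
  have hp : 0 ≤ p := by
    contrapose! hL
    exact (liouvilleWith_one x).mono (by linarith)
  simp only [LiouvilleWith, not_exists, not_frequently] at hL
  obtain ⟨N, hN⟩ := eventually_atTop.1 (hL 1)
  obtain ⟨ε, hεN, hε⟩ : ∃ ε : ℝ, (∀ k ≤ N, ∀ m : ℤ, ε ≤ dist x (m / k)) ∧ 0 < ε :=
    (((hx.eventually_forall_le_dist_cast_div_of_denom_le N).filter_mono
      nhdsWithin_le_nhds).and self_mem_nhdsWithin : ∀ᶠ ε in 𝓝[>] (0 : ℝ), _).exists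
  refine ⟨min 1 ε, lt_min one_pos hε, fun r => ?_⟩
  have hden : 1 ≤ (r.den : ℝ) := mod_cast r.den_pos
  rcases le_total N r.den with hlarge | hsmall
  · have hr := hN r.den hlarge r.num
    rw [← Rat.cast_def, not_and, not_lt] at hr
    calc min 1 ε / (r.den : ℝ) ^ p ≤ 1 / (r.den : ℝ) ^ p := by
          gcongr
          exact min_le_left 1 ε
      _ ≤ |x - r| := hr (hx.ne_rat r)
  · have hr := hεN r.den hsmall r.num
    rw [Real.dist_eq, ← Rat.cast_def] at hr
    calc min 1 ε / (r.den : ℝ) ^ p ≤ min 1 ε :=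
          div_le_self (le_min zero_le_one hε.le) (Real.one_le_rpow hden hp)
      _ ≤ |x - r| := (min_le_right 1 ε).trans hr

theorem HasIrrationalityExponentTwo.exists_rat_rpow_le_den {x s : ℝ}
    (hx : HasIrrationalityExponentTwo x) (hs₀ : 0 < s) (hs₁ : s < 1) :
    ∃ c > 0, ∀ X ≥ (1 : ℝ), ∃ r : ℚ,
      |x - r| ≤ 1 / (r.den : ℝ) ^ 2 ∧ (r.den : ℝ) ≤ X ∧ c * X ^ s ≤ r.den := by
  have hp : 2 < 1 + 1 / s := by
    have := (one_lt_div hs₀).2 hs₁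
    linarith
  obtain ⟨c, hc, hcr⟩ := exists_div_rpow_den_le_abs_sub hx.1 (hx.2 _ hp)
  refine ⟨c ^ s, Real.rpow_pos_of_pos hc s, fun X hX => ?_⟩
  obtain ⟨r, hr, hrX⟩ := Real.exists_rat_abs_sub_le_and_den_le x (Nat.floor_pos.2 hX)
  have hden : 0 < (r.den : ℝ) := mod_cast r.den_pos
  have hdenX : (r.den : ℝ) ≤ X := (Nat.le_floor_iff (by linarith)).1 hrX
  have hXr : |x - r| ≤ 1 / (X * r.den) := by
    refine hr.trans ?_
    gcongr
    exact (Nat.lt_floor_add_one X).le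
  have hcX : c * X ≤ (r.den : ℝ) ^ (1 / s) := by
    have h := (hcr r).trans hXr
    rw [Real.rpow_add hden, Real.rpow_one,
      div_le_div_iff₀ (by positivity) (by positivity), one_mul] at h
    exact le_of_mul_le_mul_right (by linarith) hden
  refine ⟨r, ?_, hdenX, ?_⟩
  · rw [sq]
    exact hXr.trans (by gcongr)
  · calc c ^ s * X ^ s = (c * X) ^ s := (Real.mul_rpow hc.le (by linarith)).symm
      _ ≤ ((r.den : ℝ) ^ (1 / s)) ^ s := by gcongr
      _ = r.den := by rw [← Real.rpow_mul hden.le, one_div_mul_cancel hs₀.ne', Real.rpow_one]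

end Diophantine

theorem ae_div_of_ae {ι : Type*} [Fintype ι] {P : ℝ → Prop} (hP : ∀ᵐ x, P x) {i j : ι}
    (hij : i ≠ j) : ∀ᵐ v : ι → ℝ, v j ≠ 0 → P (v i / v j) := by
  classical
  obtain ⟨s, hPs, hs, hs₀⟩ := exists_measurable_superset_of_null (ae_iff.1 hP)
  have hmeas : MeasurableSet {v : ι → ℝ | v j ≠ 0 → v i / v j ∉ s} := by
    have hj : Measurable fun v : ι → ℝ => v j := measurable_pi_apply j
    have hdiv : Measurable fun v : ι → ℝ => v i / v j := (measurable_pi_apply i).div hj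
    exact (hj (measurableSet_singleton 0).compl).himp (hdiv hs.compl)
  -- By Fubini it suffices to let the `i`-th coordinate vary on a line where `v j` is constant.
  have hline : ∀ v : ι → ℝ, ∀ᵐ t : ℝ,
      v + LinearMap.single ℝ (fun _ => ℝ) i t ∈ {v : ι → ℝ | v j ≠ 0 → v i / v j ∉ s} := by
    intro v
    by_cases hv : v j = 0
    · simp [hij.symm, hv]
    have hs_ae : ∀ᵐ x : ℝ, x ∉ s := measure_eq_zero_iff_ae_notMem.1 hs₀
    have haffine := ((Measure.quasiMeasurePreserving_smul volume (inv_ne_zero hv)).comp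
      (measurePreserving_add_left volume (v i)).quasiMeasurePreserving).ae hs_ae
    filter_upwards [haffine] with t ht
    simpa [hij.symm, div_eq_inv_mul] using fun _ => ht
  filter_upwards [ae_mem_of_ae_add_linearMap_mem _ volume volume hmeas hline] with v hv hvj
  exact by_contra fun h => hv hvj (hPs h)

theorem ae_apply_ne_zero {ι : Type*} [Fintype ι] (i : ι) : ∀ᵐ v : ι → ℝ, v i ≠ 0 :=
  (Measure.quasiMeasurePreserving_eval (fun _ : ι => (volume : Measure ℝ)) i).ae
    (Measure.ae_ne volume 0)

section Contraction

variable {ι κ o : Type*} [Fintype ι] [DecidableEq ι] [Fintype κ] [DecidableEq κ] [Fintype o]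
  [DecidableEq o]

theorem intCast_specialLinearGroup_smul (γ : SpecialLinearGroup ι ℤ) (v : ι → ℝ) :
    (γ : SpecialLinearGroup ι ℝ) • v =
      ((γ : Matrix ι ι ℤ).map (Int.cast : ℤ → ℝ)).mulVec v :=
  rfl

/-- Some matrix in `SL(ι, ℤ)` with entries bounded by `T` maps `v` into the sup-norm ball of
radius `δ`. -/
def HasContraction (v : ι → ℝ) (T δ : ℝ) : Prop :=
  ∃ γ : SpecialLinearGroup ι ℤ,
    ‖(γ : SpecialLinearGroup ι ℝ) • v‖ ≤ δ ∧ ‖(γ : Matrix ι ι ℤ)‖ ≤ T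

variable {v : ι → ℝ} {T δ : ℝ}

theorem hasContraction_iff_exists_matrix (hT : 0 ≤ T) (hδ : 0 ≤ δ) :
    HasContraction v T δ ↔ ∃ A : Matrix ι ι ℤ, A.det = 1 ∧
      (∀ i, |(A.map (Int.cast : ℤ → ℝ)).mulVec v i| ≤ δ) ∧ ∀ i j, |(A i j : ℝ)| ≤ T := by
  simp only [HasContraction, Matrix.norm_le_iff hT, pi_norm_le_iff_of_nonneg hδ]
  exact ⟨fun ⟨γ, hγ⟩ => ⟨γ, γ.det_coe, hγ⟩, fun ⟨A, hA, h⟩ => ⟨⟨A, hA⟩, h⟩⟩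

namespace HasContraction

theorem mono {T' δ' : ℝ} (h : HasContraction v T δ) (hT : T ≤ T') (hδ : δ ≤ δ') :
    HasContraction v T' δ' :=
  let ⟨γ, hγδ, hγT⟩ := h
  ⟨γ, hγδ.trans hδ, hγT.trans hT⟩

theorem smul (h : HasContraction v T δ) (c : ℝ) : HasContraction (c • v) T (|c| * δ) := by
  obtain ⟨γ, hγδ, hγT⟩ := h
  refine ⟨γ, ?_, hγT⟩
  rw [intCast_specialLinearGroup_smul, Matrix.mulVec_smul, norm_smul, Real.norm_eq_abs]
  exact mul_le_mul_of_nonneg_left hγδ (abs_nonneg c)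

theorem of_comp_equiv (e : κ ≃ ι) (hT : 0 ≤ T) (hδ : 0 ≤ δ) (h : HasContraction (v ∘ e) T δ) :
    HasContraction v T δ := by
  rw [hasContraction_iff_exists_matrix hT hδ] at h ⊢
  obtain ⟨A, hA, hAδ, hAT⟩ := h
  refine ⟨A.reindex e e, (Matrix.det_reindex_self e A).trans hA, fun i => ?_,
    fun i j => hAT (e.symm i) (e.symm j)⟩
  rw [Matrix.reindex_apply, ← Matrix.submatrix_map, Matrix.submatrix_mulVec_equiv]
  exact hAδ (e.symm i)

theorem of_blocks {v : κ × o → ℝ} (hT : 0 ≤ T) (hδ : 0 ≤ δ)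
    (h : ∀ k, HasContraction (fun i => v (i, k)) T δ) : HasContraction v T δ := by
  simp only [hasContraction_iff_exists_matrix hT hδ] at h ⊢
  choose A hA hAδ hAT using h
  refine ⟨Matrix.blockDiagonal A, by simp [hA], fun ⟨i, k⟩ => ?_, fun ⟨i, k⟩ ⟨j, l⟩ => ?_⟩
  · convert hAδ k i using 2
    simp [Matrix.mulVec, dotProduct, Fintype.sum_prod_type, Matrix.blockDiagonal_apply,
      apply_ite (Int.cast : ℤ → ℝ), ite_mul]
  · rw [Matrix.blockDiagonal_apply]
    split_ifs
    · exact hAT k i j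
    · simpa using hT

end HasContraction

theorem norm_intCast_smul_pos (γ : SpecialLinearGroup ι ℤ) (hv : v ≠ 0) :
    0 < ‖(γ : SpecialLinearGroup ι ℝ) • v‖ :=
  norm_pos_iff.2 ((smul_ne_zero_iff_ne _).2 hv)

theorem infinite_setOf_norm_smul_le_rpow {ω : ℝ} (hv : v ≠ 0) (hω : 0 < ω)
    (h : ∀ᶠ T in atTop, HasContraction v T (T ^ (-ω))) :
    {γ : SpecialLinearGroup ι ℤ |
      ‖(γ : SpecialLinearGroup ι ℝ) • v‖ ≤ ‖(γ : Matrix ι ι ℤ)‖ ^ (-ω)}.Infinite := by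
  intro hfin
  have hlt : ∀ᶠ T : ℝ in atTop, ∀ γ ∈ {γ : SpecialLinearGroup ι ℤ |
      ‖(γ : SpecialLinearGroup ι ℝ) • v‖ ≤ ‖(γ : Matrix ι ι ℤ)‖ ^ (-ω)},
      T ^ (-ω) < ‖(γ : SpecialLinearGroup ι ℝ) • v‖ :=
    hfin.eventually_all.2 fun γ _ =>
      (tendsto_rpow_neg_atTop hω).eventually_lt_const (norm_intCast_smul_pos γ hv)
  obtain ⟨T, ⟨γ, hγv, hγT⟩, hT⟩ := (h.and hlt).exists
  have hγ : 0 < ‖(γ : Matrix ι ι ℤ)‖ := by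
    refine norm_pos_iff.2 fun h₀ => (norm_intCast_smul_pos γ hv).ne' ?_
    simp [intCast_specialLinearGroup_smul, h₀]
  exact (hT γ (hγv.trans (Real.rpow_le_rpow_of_nonpos hγ hγT (by linarith)))).not_ge hγv

end Contraction

section Plane

theorem exists_SL2_row_abs_apply_one_zero_le {a b : ℤ} (hab : IsCoprime a b) (ha : a ≠ 0) :
    ∃ γ : SL(2, ℤ), γ 0 0 = a ∧ γ 0 1 = b ∧ |γ 1 0| ≤ |a| := by
  obtain ⟨g, hg₀, hg₁⟩ := hab.exists_SL2_row 0
  have hdet : a * g 1 1 - b * g 1 0 = 1 := by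
    rw [← hg₀, ← hg₁, ← Matrix.det_fin_two, g.det_coe]
  refine ⟨⟨!![a, b; g 1 0 % a, g 1 1 - b * (g 1 0 / a)], ?_⟩, rfl, rfl, ?_⟩
  · rw [Matrix.det_fin_two_of]
    linear_combination hdet - b * Int.mul_ediv_add_emod (g 1 0) a
  · change |g 1 0 % a| ≤ |a|
    rw [abs_of_nonneg (Int.emod_nonneg _ ha)]
    exact (Int.emod_lt_abs _ ha).le

theorem intCast_smul_vec_one_apply (γ : SL(2, ℤ)) (α : ℝ) (i : Fin 2) :
    ((γ : SL(2, ℝ)) • ![α, 1]) i = γ i 0 * α + γ i 1 := by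
  simp [intCast_specialLinearGroup_smul, Matrix.mulVec, dotProduct, Fin.sum_univ_two]

theorem norm_le_of_forall_abs_apply_zero_le {γ : SL(2, ℤ)} {Q : ℝ} (hγ : ∀ i, |(γ i 0 : ℝ)| ≤ Q)
    (α : ℝ) :
    ‖(γ : Matrix (Fin 2) (Fin 2) ℤ)‖ ≤ Q * (|α| + 1) + ‖(γ : SL(2, ℝ)) • ![α, 1]‖ := by
  have hQ : 0 ≤ Q := (abs_nonneg _).trans (hγ 0)
  rw [Matrix.norm_le_iff (by positivity)]
  refine fun i => Fin.forall_fin_two.2 ⟨?_, ?_⟩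
  · calc |(γ i 0 : ℝ)| ≤ Q := hγ i
      _ ≤ Q * (|α| + 1) := le_mul_of_one_le_right hQ (by linarith [abs_nonneg α])
      _ ≤ _ := le_add_of_nonneg_right (norm_nonneg _)
  · have hrow : (γ i 1 : ℝ) = ((γ : SL(2, ℝ)) • ![α, 1]) i - γ i 0 * α := by
      rw [intCast_smul_vec_one_apply]
      ring
    calc |(γ i 1 : ℝ)| ≤ |((γ : SL(2, ℝ)) • ![α, 1]) i| + |γ i 0 * α| := hrow ▸ abs_sub _ _
      _ ≤ ‖(γ : SL(2, ℝ)) • ![α, 1]‖ + Q * (|α| + 1) := by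
        rw [abs_mul]
        gcongr
        · exact norm_le_pi_norm ((γ : SL(2, ℝ)) • ![α, 1]) i
        · exact hγ i
        · linarith
      _ = _ := add_comm _ _

theorem norm_smul_vec_one_le_of_abs_sub_le {γ : SL(2, ℤ)} {α : ℝ} {r : ℚ}
    (h₀ : γ 0 0 = r.den) (h₁ : γ 0 1 = -r.num) (hγ : |γ 1 0| ≤ r.den)
    (hr : |α - r| ≤ 1 / (r.den : ℝ) ^ 2) : ‖(γ : SL(2, ℝ)) • ![α, 1]‖ ≤ 2 / r.den := by
  have hden : 0 < (r.den : ℝ) := mod_cast r.den_pos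
  have hfst : |(r.den : ℝ) * α - r.num| ≤ 1 / r.den := by
    have h : (r.den : ℝ) * α - r.num = r.den * (α - r) := by
      rw [Rat.cast_def r]
      field_simp
    rw [h, abs_mul, abs_of_pos hden]
    calc (r.den : ℝ) * |α - r| ≤ r.den * (1 / (r.den : ℝ) ^ 2) := by gcongr
      _ = 1 / r.den := by field_simp
  have hdet : (r.den : ℝ) * γ 1 1 + r.num * γ 1 0 = 1 := by
    have h := γ.det_coe
    rw [Matrix.det_fin_two, h₀, h₁] at h
    have hdet_int : (r.den : ℤ) * γ 1 1 + r.num * γ 1 0 = 1 := by linear_combination h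
    exact_mod_cast hdet_int
  -- The determinant condition expresses the second linear form through the first.
  have hsnd : (γ 1 0 : ℝ) * α + γ 1 1 = γ 1 0 / r.den * (r.den * α - r.num) + 1 / r.den := by
    field_simp
    linear_combination hdet
  have hcol : |(γ 1 0 : ℝ) / r.den| ≤ 1 := by
    rw [abs_div, abs_of_pos hden, div_le_one hden]
    exact_mod_cast hγ
  rw [pi_norm_le_iff_of_nonneg (by positivity), Fin.forall_fin_two]
  simp only [intCast_smul_vec_one_apply, Real.norm_eq_abs]
  constructor
  · rw [h₀, h₁]
    push_cast
    rw [← sub_eq_add_neg]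
    exact hfst.trans (by gcongr; norm_num)
  · calc |(γ 1 0 : ℝ) * α + γ 1 1|
        ≤ |(γ 1 0 : ℝ) / r.den| * |r.den * α - r.num| + 1 / r.den := by
          rw [hsnd]
          refine (abs_add_le _ _).trans_eq ?_
          rw [abs_mul, abs_of_pos (one_div_pos.2 hden)]
      _ ≤ 1 * (1 / r.den) + 1 / r.den := by gcongr
      _ = 2 / r.den := by ring

theorem hasContraction_of_abs_sub_le {α : ℝ} {r : ℚ} (hr : |α - r| ≤ 1 / (r.den : ℝ) ^ 2) :
    HasContraction ![α, 1] ((|α| + 3) * r.den) (2 / r.den) := by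
  have hden : 1 ≤ (r.den : ℝ) := mod_cast r.den_pos
  obtain ⟨γ, h₀, h₁, hγ⟩ := exists_SL2_row_abs_apply_one_zero_le
    r.isCoprime_num_den.symm.neg_right (mod_cast r.den_ne_zero)
  rw [Nat.abs_cast] at hγ
  have hsmall := norm_smul_vec_one_le_of_abs_sub_le h₀ h₁ hγ hr
  have hcol : ∀ i, |(γ i 0 : ℝ)| ≤ r.den :=
    Fin.forall_fin_two.2 ⟨by rw [h₀]; simp, mod_cast hγ⟩
  refine ⟨γ, hsmall, (norm_le_of_forall_abs_apply_zero_le hcol α).trans ?_⟩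
  have hdiv : 2 / (r.den : ℝ) ≤ 2 * r.den :=
    (div_le_self zero_le_two hden).trans (by linarith)
  linarith

theorem HasIrrationalityExponentTwo.eventually_hasContraction {v : Fin 2 → ℝ} (hv : v 1 ≠ 0)
    (hα : HasIrrationalityExponentTwo (v 0 / v 1)) {ω : ℝ} (hω : ω < 1) :
    ∀ᶠ T in atTop, HasContraction v T (T ^ (-ω)) := by
  obtain ⟨s, hωs, hs₁⟩ := exists_between (max_lt hω one_pos)
  obtain ⟨hωs, hs₀⟩ := max_lt_iff.1 hωs
  obtain ⟨c, hc, hcX⟩ := hα.exists_rat_rpow_le_den hs₀ hs₁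
  have hv_smul : v = v 1 • ![v 0 / v 1, 1] := by
    ext i
    fin_cases i <;> simp [mul_div_cancel₀, hv]
  set α := v 0 / v 1
  set A := |α| + 3
  have hA : 0 < A := by positivity
  have hlarge : ∀ᶠ T : ℝ in atTop, 2 * |v 1| * A ^ s / c ≤ T ^ (s - ω) :=
    (tendsto_rpow_atTop (sub_pos.2 hωs)).eventually_ge_atTop _
  filter_upwards [hlarge, eventually_ge_atTop A] with T hT hAT
  have hT₀ : 0 < T := hA.trans_le hAT
  obtain ⟨r, hr, hrX, hXr⟩ := hcX (T / A) ((one_le_div hA).2 hAT)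
  rw [hv_smul]
  refine ((hasContraction_of_abs_sub_le hr).smul (v 1)).mono ((le_div_iff₀' hA).1 hrX) ?_
  calc |v 1| * (2 / r.den) ≤ |v 1| * (2 / (c * (T / A) ^ s)) := by gcongr
    _ = 2 * |v 1| * A ^ s / c / T ^ s := by
      rw [Real.div_rpow hT₀.le hA.le]
      field_simp
    _ ≤ T ^ (s - ω) / T ^ s := by gcongr
    _ = T ^ (-ω) := by rw [← Real.rpow_sub hT₀, sub_sub_cancel_left]

end Plane

section Exponents

variable {ι : Type*} [Fintype ι] [DecidableEq ι]

/-- The Diophantine exponent of the orbit of `v` under `SL(ι, ℤ)`: the supremum of the `ω` for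
which `‖γ v‖ ≤ ‖γ‖ ^ (-ω)` has infinitely many solutions `γ`. It lives in `EReal` so that the
supremum of an unbounded or empty set is the intended one. -/
def orbitExponent (v : ι → ℝ) : EReal :=
  sSup {w : EReal | ∃ ω : ℝ, w = (ω : EReal) ∧
    {γ : SpecialLinearGroup ι ℤ |
      ‖(γ : SpecialLinearGroup ι ℝ) • v‖ ≤ ‖(γ : Matrix ι ι ℤ)‖ ^ (-ω)}.Infinite}

/-- The uniform Diophantine exponent of the orbit of `v` under `SL(ι, ℤ)`: the supremum of the `ω`
for which, at every large scale `T`, some `γ` of norm at most `T` satisfies `‖γ v‖ ≤ T ^ (-ω)`. -/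
def uniformOrbitExponent (v : ι → ℝ) : EReal :=
  sSup {w : EReal | ∃ ω : ℝ, w = (ω : EReal) ∧ ∀ᶠ T in atTop, HasContraction v T (T ^ (-ω))}

theorem le_sSup_coe_of_forall_mem_Ioo {P : ℝ → Prop} {a b : ℝ} (hab : a < b)
    (h : ∀ ω ∈ Set.Ioo a b, P ω) :
    (b : EReal) ≤ sSup {w : EReal | ∃ ω : ℝ, w = (ω : EReal) ∧ P ω} := by
  refine le_of_forall_lt fun c hc => ?_
  obtain ⟨ω, hcω, hωb⟩ := EReal.lt_iff_exists_real_btwn.1 (max_lt hc (EReal.coe_lt_coe hab))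
  obtain ⟨hcω, haω⟩ := max_lt_iff.1 hcω
  exact hcω.trans_le (le_sSup ⟨ω, rfl, h ω ⟨mod_cast haω, mod_cast hωb⟩⟩)

theorem ae_forall_eventually_hasContraction (hι : Even (Fintype.card ι)) :
    ∀ᵐ v : ι → ℝ, ∀ ω < (1 : ℝ), ∀ᶠ T in atTop, HasContraction v T (T ^ (-ω)) := by
  obtain ⟨m, hm⟩ := hι
  let e : Fin 2 × Fin m ≃ ι :=
    finProdFinEquiv.trans (Fintype.equivFinOfCardEq (hm.trans (two_mul m).symm)).symm
  have hratio : ∀ᵐ v : ι → ℝ, ∀ k, v (e (1, k)) ≠ 0 ∧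
      HasIrrationalityExponentTwo (v (e (0, k)) / v (e (1, k))) := by
    refine ae_all_iff.2 fun k => ?_
    have hne : e (0, k) ≠ e (1, k) := e.injective.ne (by simp)
    filter_upwards [ae_apply_ne_zero (e (1, k)), ae_div_of_ae ae_hasIrrationalityExponentTwo hne]
      with v hv hdiv using ⟨hv, hdiv hv⟩
  filter_upwards [hratio] with v hv ω hω
  have hplanes : ∀ᶠ T in atTop, ∀ k, HasContraction (fun i => v (e (i, k))) T (T ^ (-ω)) :=
    eventually_all.2 fun k => (hv k).2.eventually_hasContraction (hv k).1 hω
  filter_upwards [hplanes, eventually_ge_atTop 0] with T hT hT₀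
  have hδ : 0 ≤ T ^ (-ω) := Real.rpow_nonneg hT₀ _
  exact .of_comp_equiv e hT₀ hδ (.of_blocks hT₀ hδ hT)

theorem statement6_general [Nonempty ι] (hι : Even (Fintype.card ι)) :
    ∀ᵐ v : ι → ℝ, 1 ≤ orbitExponent v ∧ 1 ≤ uniformOrbitExponent v := by
  filter_upwards [ae_forall_eventually_hasContraction hι, ae_apply_ne_zero (Classical.arbitrary ι)]
    with v hcontr hne
  have hv : v ≠ 0 := fun h => hne (congrFun h _)
  exact ⟨le_sSup_coe_of_forall_mem_Ioo one_pos fun ω hω =>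
      infinite_setOf_norm_smul_le_rpow hv hω.1 (hcontr ω hω.2),
    le_sSup_coe_of_forall_mem_Ioo one_pos fun ω hω => hcontr ω hω.2⟩

end Exponents

section FinFour

theorem mnorm4_eq_norm (γ : Matrix (Fin 4) (Fin 4) ℤ) : mnorm4 γ = ‖γ‖ := by
  refine eq_of_forall_ge_iff fun T => ?_
  rcases lt_or_ge T 0 with hT | hT
  · exact iff_of_false (hT.trans_le (Nat.cast_nonneg _)).not_ge (hT.trans_le (norm_nonneg γ)).not_ge
  · rw [mnorm4, ← Nat.le_floor_iff hT, Finset.sup_le_iff, Matrix.norm_le_iff hT]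
    simp [Nat.le_floor_iff hT, Nat.cast_natAbs, Int.norm_eq_abs]

theorem vnorm4_eq_norm (w : Fin 4 → ℝ) : vnorm4 w = ‖w‖ := by
  refine eq_of_forall_ge_iff fun t => ?_
  simp [vnorm4, pi_norm_le_iff_of_nonempty, Fin.forall_fin_succ, and_assoc]

theorem sl4Act_eq_smul (γ : SpecialLinearGroup (Fin 4) ℤ) (v : Fin 4 → ℝ) :
    sl4Act γ v = (γ : SpecialLinearGroup (Fin 4) ℝ) • v :=
  rfl

theorem eventually_hasContraction_iff {v : Fin 4 → ℝ} {ω : ℝ} :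
    (∀ᶠ T in atTop, HasContraction v T (T ^ (-ω))) ↔
      ∃ T₀ : ℝ, ∀ T : ℝ, T₀ < T → 0 < T →
        ∃ γ : SpecialLinearGroup (Fin 4) ℤ,
          vnorm4 (sl4Act γ v) ≤ T ^ (-ω) ∧ mnorm4 (γ : Matrix (Fin 4) (Fin 4) ℤ) ≤ T := by
  simp only [HasContraction, vnorm4_eq_norm, sl4Act_eq_smul, mnorm4_eq_norm]
  constructor
  · intro h
    obtain ⟨T₀, hT₀⟩ := eventually_atTop.1 h
    exact ⟨T₀, fun T hT _ => hT₀ T hT.le⟩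
  · rintro ⟨T₀, hT₀⟩
    filter_upwards [eventually_gt_atTop T₀, eventually_gt_atTop 0] with T hT using hT₀ T hT

end FinFour

/-- For Lebesgue-almost every `v ∈ ℝ⁴`: the supremum of all `ω` such that
`|γv| ≤ |γ|^{−ω}` for infinitely many `γ ∈ SL₄(ℤ)` is `≥ 1`, and the supremum of all `ω`
such that for every sufficiently large `T > 0` there is `γ ∈ SL₄(ℤ)` with `|γv| ≤ T^{−ω}`
and `|γ| ≤ T`, is also `≥ 1`. -/
theorem statement6 :
    ∀ᵐ v : Fin 4 → ℝ ∂MeasureTheory.volume,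
      (1 : EReal) ≤ sSup {w : EReal | ∃ ω : ℝ, w = (ω : EReal) ∧
          {γ : Matrix.SpecialLinearGroup (Fin 4) ℤ |
            vnorm4 (sl4Act γ v) ≤ mnorm4 (γ : Matrix (Fin 4) (Fin 4) ℤ) ^ (-ω)}.Infinite} ∧
      (1 : EReal) ≤ sSup {w : EReal | ∃ ω : ℝ, w = (ω : EReal) ∧
          ∃ T₀ : ℝ, ∀ T : ℝ, T₀ < T → 0 < T →
            ∃ γ : Matrix.SpecialLinearGroup (Fin 4) ℤ,
              vnorm4 (sl4Act γ v) ≤ T ^ (-ω) ∧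
              mnorm4 (γ : Matrix (Fin 4) (Fin 4) ℤ) ≤ T} := by
  simpa only [orbitExponent, uniformOrbitExponent, eventually_hasContraction_iff,
    ← vnorm4_eq_norm, ← mnorm4_eq_norm, ← sl4Act_eq_smul] using
    statement6_general (ι := Fin 4) (by decide)

end
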